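/- arXiv:1809.10779 — 5 statements merged into one kernel-verified Lean document; each statement's English description precedes it below -/
import Mathlib

section
/- Let M be a matroid. Then every real root of the reliability polynomial Rel(M;q) lies in [−1,0) ∪ {1}; in particular, every real reliability root of a matroid lies in the closed unit disk of the complex plane. -/
/-!
Deletion and contraction of a vertex `e` satisfy
`Rel(M) = (1 - q) Rel(M \ e) + q Rel(M / e)` (`relR_del_con`), where the link of a loop is empty and
contributes `0`; for a coloop, `M / e = M \ e`, so `Rel(M) = Rel(M \ e)` (`relR_coloop`). The
roots are excluded from three ranges.

* For `0 ≤ q < 1` every term of the polynomial is nonnegative and the empty face contributes a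
  positive one.
* For `1 < q`, the recursion shows by induction that `(-1) ^ (m + r) Rel(M; q) > 0`, with `m` the size
  of the ground set and `r` the rank (`sign_of_one_lt`). This is the nonnegativity of the `h`-vector
  in disguise.
* For `q < -1`, it shows that `(-1) ^ (r + c) Rel(M; q) > 0`, with `c` the number of coloops
  (`sign_of_lt_neg_one`). Coloops may be deleted, so let `c = 0`, and let `e` be a nonloop.
  Contraction creates no coloops, so `q Rel(M / e)` has the desired sign. If `M \ e` has an even
  number of coloops, so does `(1 - q) Rel(M \ e)`. Otherwise choose a coloop `f` of `M \ e`, so that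
  `e` and `f` are in series and `M / e \ f = M \ e \ f`. Expanding once more gives
  `Rel(M) = (1 - q ^ 2) Rel(M \ e \ f) + q ^ 2 Rel(M / e / f)`,
  where both terms have the desired sign because `1 - q ^ 2 < 0`.
-/

open Finset

/-- A simplicial complex on ground set `X`: faces are subsets of `X` closed under containment. -/
def IsComplex {α : Type*} [DecidableEq α] (X : Finset α) (C : Finset (Finset α)) : Prop :=
  (∀ F ∈ C, F ⊆ X) ∧ ∀ F ∈ C, ∀ G ⊆ F, G ∈ C

/-- A matroid: a nonempty complex satisfying the exchange axiom. -/
def IsMatroidC {α : Type*} [DecidableEq α] (X : Finset α) (C : Finset (Finset α)) : Prop :=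
  IsComplex X C ∧ C.Nonempty ∧
    ∀ σ ∈ C, ∀ τ ∈ C, σ.card < τ.card → ∃ z ∈ τ, z ∉ σ ∧ insert z σ ∈ C

/-- The reliability polynomial of a complex `C` on ground set `X`, as a function of `q : ℂ`. -/
noncomputable def relPoly {α : Type*} [DecidableEq α] (X : Finset α) (C : Finset (Finset α))
    (q : ℂ) : ℂ :=
  ∑ F ∈ C, q ^ F.card * (1 - q) ^ (X.card - F.card)

namespace RelRoots

variable {α : Type*} [DecidableEq α]

/-- The reliability polynomial as a function of a real variable. -/
noncomputable def relR (X : Finset α) (C : Finset (Finset α)) (q : ℝ) : ℝ :=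
  ∑ F ∈ C, q ^ F.card * (1 - q) ^ (X.card - F.card)

/-- Deletion of `e`: the faces avoiding `e`, to be regarded on the ground set `X.erase e`. -/
def del (C : Finset (Finset α)) (e : α) : Finset (Finset α) := C.filter (fun F => e ∉ F)

/-- Contraction of `e`, that is, the link of `e`: the faces avoiding `e` that stay faces when `e` is
added, to be regarded on `X.erase e`. It is empty when `e` is a loop. -/
def con (C : Finset (Finset α)) (e : α) : Finset (Finset α) :=
  C.filter (fun F => e ∉ F ∧ insert e F ∈ C)

/-- The coloops: the elements of the ground set that can be added to every face. -/
def coloops (X : Finset α) (C : Finset (Finset α)) : Finset α :=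
  X.filter (fun e => ∀ F ∈ C, insert e F ∈ C)

/-- `C` has rank `r`: the largest size of a face is `r`. -/
def HasRank (C : Finset (Finset α)) (r : ℕ) : Prop :=
  (∃ B ∈ C, B.card = r) ∧ ∀ F ∈ C, F.card ≤ r

theorem mem_del {C : Finset (Finset α)} {e : α} {F : Finset α} :
    F ∈ del C e ↔ F ∈ C ∧ e ∉ F := by simp [del]

theorem mem_con {C : Finset (Finset α)} {e : α} {F : Finset α} :
    F ∈ con C e ↔ F ∈ C ∧ e ∉ F ∧ insert e F ∈ C := by simp [con]

theorem mem_coloops {X : Finset α} {C : Finset (Finset α)} {e : α} :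
    e ∈ coloops X C ↔ e ∈ X ∧ ∀ F ∈ C, insert e F ∈ C := by simp [coloops]

theorem empty_mem {X : Finset α} {C : Finset (Finset α)} (hM : IsMatroidC X C) : ∅ ∈ C := by
  obtain ⟨⟨_, h⟩, ⟨F, hF⟩, _⟩ := hM
  exact h F hF ∅ (empty_subset _)

theorem exists_hasRank {X : Finset α} {C : Finset (Finset α)} (hM : IsMatroidC X C) :
    ∃ r, HasRank C r := by
  obtain ⟨B, hB, hmax⟩ := exists_max_image C Finset.card hM.2.1
  exact ⟨B.card, ⟨B, hB, rfl⟩, hmax⟩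

/-- Iterated exchange: a face `σ` grows to the size of `τ` using elements of `τ` only. -/
theorem exists_extension {X : Finset α} {C : Finset (Finset α)} (hM : IsMatroidC X C)
    {σ τ : Finset α} (hσ : σ ∈ C) (hτ : τ ∈ C) (hc : σ.card ≤ τ.card) :
    ∃ ρ ∈ C, σ ⊆ ρ ∧ ρ ⊆ σ ∪ τ ∧ ρ.card = τ.card := by
  induction hn : τ.card - σ.card generalizing σ with
  | zero => exact ⟨σ, hσ, Subset.rfl, subset_union_left, by omega⟩
  | succ n ih =>
    obtain ⟨z, hz, hzσ, hins⟩ := hM.2.2 σ hσ τ hτ (by omega)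
    have hcard := card_insert_of_notMem hzσ
    obtain ⟨ρ, h1, h2, h3, h4⟩ := ih hins (by omega) (by omega)
    refine ⟨ρ, h1, (subset_insert _ _).trans h2, ?_, h4⟩
    intro x hx
    have := h3 hx
    grind

theorem matroid_del {X : Finset α} {C : Finset (Finset α)} (hM : IsMatroidC X C) (e : α) :
    IsMatroidC (X.erase e) (del C e) := by
  refine ⟨⟨?_, ?_⟩, ⟨∅, mem_del.2 ⟨empty_mem hM, by simp⟩⟩, ?_⟩
  · intro F hF
    rw [mem_del] at hF
    exact subset_erase.2 ⟨hM.1.1 F hF.1, hF.2⟩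
  · intro F hF G hG
    rw [mem_del] at *
    exact ⟨hM.1.2 F hF.1 G hG, fun h => hF.2 (hG h)⟩
  · intro σ hσ τ hτ hc
    rw [mem_del] at hσ hτ
    obtain ⟨z, hz, hzσ, hins⟩ := hM.2.2 σ hσ.1 τ hτ.1 hc
    refine ⟨z, hz, hzσ, mem_del.2 ⟨hins, ?_⟩⟩
    grind

theorem matroid_con {X : Finset α} {C : Finset (Finset α)} (hM : IsMatroidC X C) {e : α}
    (he : {e} ∈ C) : IsMatroidC (X.erase e) (con C e) := by
  refine ⟨⟨?_, ?_⟩, ⟨∅, mem_con.2 ⟨empty_mem hM, by simp, by simpa using he⟩⟩, ?_⟩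
  · intro F hF
    rw [mem_con] at hF
    exact subset_erase.2 ⟨hM.1.1 F hF.1, hF.2.1⟩
  · intro F hF G hG
    rw [mem_con] at *
    exact ⟨hM.1.2 F hF.1 G hG, fun h => hF.2.1 (hG h),
      hM.1.2 _ hF.2.2 _ (insert_subset_insert e hG)⟩
  · intro σ hσ τ hτ hc
    rw [mem_con] at hσ hτ
    obtain ⟨z, hz, hzσ, hins⟩ := hM.2.2 _ hσ.2.2 _ hτ.2.2
      (by rw [card_insert_of_notMem hσ.2.1, card_insert_of_notMem hτ.2.1]; omega)
    have hze : z ≠ e := by grind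
    have hins' : insert e (insert z σ) ∈ C := by rwa [Finset.insert_comm]
    refine ⟨z, by grind, by grind, mem_con.2 ⟨?_, by grind, hins'⟩⟩
    exact hM.1.2 _ hins' _ (subset_insert _ _)

theorem con_eq_empty {X : Finset α} {C : Finset (Finset α)} (hM : IsMatroidC X C) {e : α}
    (he : {e} ∉ C) : con C e = ∅ := by
  refine eq_empty_of_forall_notMem fun F hF => he ?_
  exact hM.1.2 _ (mem_con.1 hF).2.2 _ (by simp)

theorem con_eq_del {X : Finset α} {C : Finset (Finset α)} {e : α} (he : e ∈ coloops X C) :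
    con C e = del C e := by
  ext F
  rw [mem_con, mem_del]
  exact ⟨fun h => ⟨h.1, h.2.1⟩, fun h => ⟨h.1, h.2, (mem_coloops.1 he).2 F h.1⟩⟩

theorem singleton_mem_of_coloop {X : Finset α} {C : Finset (Finset α)} (hM : IsMatroidC X C)
    {e : α} (he : e ∈ coloops X C) : {e} ∈ C := by
  simpa using (mem_coloops.1 he).2 ∅ (empty_mem hM)

theorem hasRank_del {X : Finset α} {C : Finset (Finset α)} (hM : IsMatroidC X C) {r : ℕ}
    (hr : HasRank C r) {e : α} (heX : e ∈ X) (he : e ∉ coloops X C) : HasRank (del C e) r := by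
  obtain ⟨⟨B, hB, hBr⟩, hmax⟩ := hr
  refine ⟨?_, fun F hF => hmax F (mem_del.1 hF).1⟩
  -- A face that cannot be enlarged by `e` extends to a basis avoiding `e`.
  have : ∃ F ∈ C, insert e F ∉ C := by
    by_contra! h
    exact he (mem_coloops.2 ⟨heX, h⟩)
  obtain ⟨F, hF, hFe⟩ := this
  obtain ⟨ρ, h1, h2, -, h4⟩ := exists_extension hM hF hB (hBr ▸ hmax F hF)
  refine ⟨ρ, mem_del.2 ⟨h1, fun h => hFe (hM.1.2 ρ h1 _ (insert_subset h h2))⟩, h4.trans hBr⟩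

theorem hasRank_con {X : Finset α} {C : Finset (Finset α)} (hM : IsMatroidC X C) {r : ℕ}
    (hr : HasRank C r) {e : α} (he : {e} ∈ C) : ∃ s, r = s + 1 ∧ HasRank (con C e) s := by
  obtain ⟨⟨B, hB, hBr⟩, hmax⟩ := hr
  obtain ⟨ρ, h1, h2, -, h4⟩ := exists_extension hM he hB (hBr ▸ hmax _ he)
  have heρ : e ∈ ρ := h2 (mem_singleton_self e)
  have hcard := card_erase_add_one heρ
  refine ⟨(ρ.erase e).card, by omega, ⟨ρ.erase e, mem_con.2 ⟨?_, by simp, ?_⟩, rfl⟩, ?_⟩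
  · exact hM.1.2 ρ h1 _ (erase_subset _ _)
  · rwa [insert_erase heρ]
  · intro F hF
    rw [mem_con] at hF
    have h5 := hmax _ hF.2.2
    rw [card_insert_of_notMem hF.2.1] at h5
    omega

/-- Contracting a nonloop creates no coloops. -/
theorem coloops_con {X : Finset α} {C : Finset (Finset α)} (hM : IsMatroidC X C) {e : α}
    (he : {e} ∈ C) (h0 : coloops X C = ∅) : coloops (X.erase e) (con C e) = ∅ := by
  obtain ⟨r, ⟨B, hB, hBr⟩, hmax⟩ := exists_hasRank hM
  refine eq_empty_of_forall_notMem fun f hf => ?_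
  obtain ⟨hfX, hf⟩ := mem_coloops.1 hf
  rw [mem_erase] at hfX
  have : f ∉ coloops X C := by simp [h0]
  apply this
  refine mem_coloops.2 ⟨hfX.2, fun F hF => ?_⟩
  by_contra hFf
  -- Some basis `A` avoids `f`; then so does a basis `D` with `e ∈ D ⊆ A ∪ {e}`, and adding `f` to
  -- `D` gives a face that is too large.
  obtain ⟨A, hA, hFA, -, hAc⟩ := exists_extension hM hF hB (hBr ▸ hmax F hF)
  have hfA : f ∉ A := fun h => hFf (hM.1.2 A hA _ (insert_subset h hFA))
  obtain ⟨D, hD, heD, hDA, hDc⟩ := exists_extension hM he hA (by rw [hAc, hBr]; exact hmax _ he)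
  have heD : e ∈ D := heD (mem_singleton_self e)
  have hfD : f ∉ D := fun h => by
    have := hDA h
    grind
  have h1 : D.erase e ∈ con C e :=
    mem_con.2 ⟨hM.1.2 D hD _ (erase_subset _ _), by simp, by rwa [insert_erase heD]⟩
  have h2 := (mem_con.1 (hf _ h1)).2.2
  rw [Finset.insert_comm, insert_erase heD] at h2
  have h3 := hmax _ h2
  rw [card_insert_of_notMem hfD] at h3
  omega

theorem coloops_del_coloop {X : Finset α} {C : Finset (Finset α)} (hM : IsMatroidC X C) {f : α}
    (hf : f ∈ coloops X C) : coloops (X.erase f) (del C f) = (coloops X C).erase f := by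
  obtain ⟨hfX, hf⟩ := mem_coloops.1 hf
  ext g
  rw [mem_erase, mem_coloops, mem_coloops, mem_erase]
  constructor
  · rintro ⟨⟨hgf, hgX⟩, h⟩
    refine ⟨hgf, hgX, fun F hF => ?_⟩
    have h1 := h (F.erase f) (mem_del.2 ⟨hM.1.2 F hF _ (erase_subset _ _), by simp⟩)
    refine hM.1.2 _ (hf _ (mem_del.1 h1).1) _ ?_
    intro x hx
    grind
  · rintro ⟨hgf, hgX, h⟩
    refine ⟨⟨hgf, hgX⟩, fun F hF => ?_⟩
    rw [mem_del] at *
    exact ⟨h F hF.1, by grind⟩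

/-- If `f` is a coloop of `M \ e` but not of `M`, then `e` and `f` are in series and
`M / e \ f = M \ e \ f`. -/
theorem del_con_of_series {X : Finset α} {C : Finset (Finset α)} (hM : IsMatroidC X C) {e f : α}
    (hf : f ∈ coloops (X.erase e) (del C e)) (hf' : f ∉ coloops X C) :
    del (con C e) f = del (del C e) f := by
  obtain ⟨hfX, hf⟩ := mem_coloops.1 hf
  rw [mem_erase] at hfX
  ext F
  simp only [mem_del, mem_con]
  refine ⟨fun h => ⟨⟨h.1.1, h.1.2.1⟩, h.2⟩, fun ⟨⟨hF, heF⟩, hfF⟩ => ⟨⟨hF, heF, ?_⟩, hfF⟩⟩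
  by_contra hins
  obtain ⟨r, ⟨B, hB, hBr⟩, hmax⟩ := exists_hasRank hM
  have : ∃ G ∈ C, insert f G ∉ C := by
    by_contra! h
    exact hf' (mem_coloops.2 ⟨hfX.2, h⟩)
  obtain ⟨G, hG, hGf⟩ := this
  -- Extending `F` inside `F ∪ A`, with `A ⊇ G` a basis avoiding `f`, yields a basis `D` that avoids
  -- both `e` and `f`, contradicting that `f` is a coloop of `M \ e`.
  obtain ⟨A, hA, hGA, -, hAc⟩ := exists_extension hM hG hB (hBr ▸ hmax G hG)
  have hfA : f ∉ A := fun h => hGf (hM.1.2 A hA _ (insert_subset h hGA))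
  obtain ⟨D, hD, hFD, hDA, hDc⟩ := exists_extension hM hF hA (by rw [hAc, hBr]; exact hmax _ hF)
  have hfD : f ∉ D := fun h => by
    have := hDA h
    grind
  have heD : e ∉ D := fun h => hins (hM.1.2 D hD _ (insert_subset h hFD))
  have h3 := hmax _ (mem_del.1 (hf D (mem_del.2 ⟨hD, heD⟩))).1
  rw [card_insert_of_notMem hfD] at h3
  omega

/-- Deletion-contraction, valid for every element of the ground set: for a loop the contraction is the
empty complex, whose sum is `0`. -/
theorem relR_del_con {X : Finset α} {C : Finset (Finset α)} (hM : IsMatroidC X C) {e : α}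
    (heX : e ∈ X) (q : ℝ) :
    relR X C q = (1 - q) * relR (X.erase e) (del C e) q + q * relR (X.erase e) (con C e) q := by
  have hXc := card_erase_add_one heX
  unfold relR
  rw [← sum_filter_add_sum_filter_not C (fun F => e ∉ F), mul_sum, mul_sum]
  congr 1
  · refine sum_congr rfl fun F hF => ?_
    replace hF := mem_del.1 hF
    have h1 := card_le_card (subset_erase.2 ⟨hM.1.1 F hF.1, hF.2⟩)
    have h2 : X.card - F.card = ((X.erase e).card - F.card) + 1 := by omega
    rw [h2, pow_succ]
    ring
  · refine sum_bij' (fun F _ => F.erase e) (fun F _ => insert e F) ?_ ?_ ?_ ?_ ?_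
    · intro F hF
      simp only [mem_filter, not_not] at hF
      exact mem_con.2 ⟨hM.1.2 F hF.1 _ (erase_subset _ _), by simp,
        by rw [insert_erase hF.2]; exact hF.1⟩
    · intro F hF
      simp [(mem_con.1 hF).2.2]
    · intro F hF
      simp only [mem_filter, not_not] at hF
      exact insert_erase hF.2
    · intro F hF
      exact erase_insert (mem_con.1 hF).2.1
    · intro F hF
      simp only [mem_filter, not_not] at hF
      have h1 := card_erase_add_one hF.2
      have h2 : X.card - F.card = (X.erase e).card - (F.erase e).card := by omega
      rw [h2, ← h1, pow_succ]
      ring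

theorem relR_coloop {X : Finset α} {C : Finset (Finset α)} (hM : IsMatroidC X C) {e : α}
    (he : e ∈ coloops X C) (q : ℝ) : relR X C q = relR (X.erase e) (del C e) q := by
  rw [relR_del_con hM (mem_coloops.1 he).1, con_eq_del he]
  ring

/-- For `1 < q` and `e` not a coloop, the terms `(1 - q) Rel(M \ e)` and `q Rel(M / e)` never have
opposite signs; coloops are simply deleted. -/
theorem sign_of_one_lt {q : ℝ} (hq : 1 < q) (n : ℕ) : ∀ (X : Finset α) (C : Finset (Finset α))
    (r : ℕ), X.card = n → IsMatroidC X C → HasRank C r →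
    0 < (-1 : ℝ) ^ (n + r) * relR X C q := by
  induction n with
  | zero =>
    intro X C r hX hM hr
    obtain rfl := card_eq_zero.1 hX
    have hC : C = {∅} := by
      ext F
      rw [mem_singleton]
      exact ⟨fun h => subset_empty.1 (hM.1.1 F h), fun h => h ▸ empty_mem hM⟩
    obtain ⟨⟨B, hB, rfl⟩, -⟩ := hr
    subst hC
    obtain rfl := mem_singleton.1 hB
    simp [relR]
  | succ n ih =>
    intro X C r hX hM hr
    obtain ⟨e, heX⟩ : X.Nonempty := card_pos.1 (by omega)
    have hXe : (X.erase e).card = n := by rw [card_erase_of_mem heX]; omega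
    by_cases he : e ∈ coloops X C
    · have hes := singleton_mem_of_coloop hM he
      obtain ⟨s, rfl, hs⟩ := hasRank_con hM hr hes
      have h := ih _ _ s hXe (matroid_con hM hes) hs
      rw [relR_coloop hM he, ← con_eq_del he]
      refine h.trans_eq ?_
      ring
    · have h1 := ih _ _ r hXe (matroid_del hM e) (hasRank_del hM hr heX he)
      rw [relR_del_con hM heX]
      have h1' := mul_pos (sub_pos.2 hq) h1
      by_cases hes : {e} ∈ C
      · obtain ⟨s, rfl, hs⟩ := hasRank_con hM hr hes
        have h2 := mul_pos (zero_lt_one.trans hq) (ih _ _ s hXe (matroid_con hM hes) hs)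
        refine (add_pos h1' h2).trans_eq ?_
        ring
      · rw [con_eq_empty hM hes]
        refine h1'.trans_eq ?_
        simp only [relR, sum_empty]
        ring

/-- For `q < -1` the sign is governed by the rank and the parity of the number of coloops; a series
pair is expanded twice when deletion alone would produce the wrong parity. -/
theorem sign_of_lt_neg_one {q : ℝ} (hq : q < -1) (n : ℕ) : ∀ (X : Finset α)
    (C : Finset (Finset α)) (r : ℕ), X.card = n → IsMatroidC X C → HasRank C r →
    0 < (-1 : ℝ) ^ (r + (coloops X C).card) * relR X C q := by
  induction n using Nat.strong_induction_on with
  | _ n ih =>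
  intro X C r hX hM hr
  by_cases h0 : coloops X C = ∅
  swap
  · obtain ⟨e, he⟩ := nonempty_iff_ne_empty.2 h0
    have heX := (mem_coloops.1 he).1
    have hes := singleton_mem_of_coloop hM he
    obtain ⟨s, rfl, hs⟩ := hasRank_con hM hr hes
    rw [con_eq_del he] at hs
    have h := ih _ (hX ▸ card_erase_lt_of_mem heX) _ _ s rfl (matroid_del hM e) hs
    rw [coloops_del_coloop hM he] at h
    rw [relR_coloop hM he, ← card_erase_add_one he]
    refine h.trans_eq ?_
    ring
  rw [h0, card_empty, add_zero]
  by_cases hl : ∃ e, {e} ∈ C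
  swap
  · have hC : C = {∅} := by
      ext F
      rw [mem_singleton]
      refine ⟨fun h => ?_, fun h => h ▸ empty_mem hM⟩
      refine eq_empty_of_forall_notMem fun x hx => hl ⟨x, ?_⟩
      exact hM.1.2 F h _ (by simpa using hx)
    obtain ⟨⟨B, hB, rfl⟩, -⟩ := hr
    subst hC
    obtain rfl := mem_singleton.1 hB
    simp only [relR, sum_singleton, card_empty, pow_zero, one_mul]
    exact pow_pos (by linarith) _
  obtain ⟨e, hes⟩ := hl
  have heX : e ∈ X := hM.1.1 _ hes (mem_singleton_self e)
  have hlt : (X.erase e).card < n := hX ▸ card_erase_lt_of_mem heX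
  have hMd := matroid_del hM e
  have hMc := matroid_con hM hes
  have hrd := hasRank_del hM hr heX (by simp [h0])
  have hcc := coloops_con hM hes h0
  obtain ⟨s, rfl, hs⟩ := hasRank_con hM hr hes
  rcases Nat.even_or_odd (coloops (X.erase e) (del C e)).card with hev | hodd
  · have h1 := ih _ hlt _ _ _ rfl hMd hrd
    have h2 := ih _ hlt _ _ _ rfl hMc hs
    rw [pow_add, hev.neg_one_pow, mul_one] at h1
    rw [hcc, card_empty, add_zero] at h2
    rw [relR_del_con hM heX]
    have h3 := add_pos (mul_pos (show 0 < 1 - q by linarith) h1)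
      (mul_pos (show 0 < -q by linarith) h2)
    refine h3.trans_eq ?_
    ring
  · -- `e` and the coloop `f` of `M \ e` are in series.
    obtain ⟨f, hf⟩ := card_pos.1 hodd.pos
    have hfX := (mem_coloops.1 hf).1
    have hlt' : ((X.erase e).erase f).card < n := (card_erase_lt_of_mem hfX).trans hlt
    have hfs := singleton_mem_of_coloop hMd hf
    obtain ⟨t, ht, ht'⟩ := hasRank_con hMd hrd hfs
    obtain rfl : s = t := by omega
    rw [con_eq_del hf] at ht'
    have h1 := ih _ hlt' _ _ _ rfl (matroid_del hMd f) ht'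
    have hev : Even ((coloops (X.erase e) (del C e)).erase f).card := by
      rw [card_erase_of_mem hf]
      exact hodd.tsub_odd odd_one
    rw [coloops_del_coloop hMd hf, pow_add, hev.neg_one_pow, mul_one] at h1
    rw [relR_del_con hM heX, relR_coloop hMd hf, relR_del_con hMc hfX,
      del_con_of_series hM hf (by simp [h0])]
    have h1' := mul_pos (show 0 < q ^ 2 - 1 by nlinarith) h1
    by_cases hfc : {f} ∈ con C e
    · obtain ⟨u, rfl, hu⟩ := hasRank_con hMc hs hfc
      have h2 := ih _ hlt' _ _ _ rfl (matroid_con hMc hfc) hu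
      rw [coloops_con hMc hfc hcc, card_empty, add_zero] at h2
      have h3 := add_pos h1' (mul_pos (show 0 < q ^ 2 by nlinarith) h2)
      refine h3.trans_eq ?_
      ring
    · rw [con_eq_empty hMc hfc]
      refine h1'.trans_eq ?_
      simp only [relR, sum_empty]
      ring

theorem relR_pos_of_nonneg_of_lt_one {X : Finset α} {C : Finset (Finset α)}
    (hM : IsMatroidC X C) {q : ℝ} (h0 : 0 ≤ q) (h1 : q < 1) : 0 < relR X C q := by
  have h2 : 0 < 1 - q := sub_pos.2 h1
  refine sum_pos' (fun F _ => by positivity) ⟨∅, empty_mem hM, ?_⟩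
  simp only [card_empty, pow_zero, one_mul]
  positivity

end RelRoots

open RelRoots in
/-- every real reliability root of a matroid lies in `[-1,0) ∪ {1}`;
in particular it lies in the closed unit disk. -/
theorem matroid_real_reliability_roots {α : Type*} [DecidableEq α]
    (X : Finset α) (C : Finset (Finset α)) (hM : IsMatroidC X C) :
    ∀ q : ℝ, relPoly X C (q : ℂ) = 0 → (q ∈ Set.Ico (-1 : ℝ) 0 ∨ q = 1) ∧ |q| ≤ 1 := by
  intro q hq
  have hR : relR X C q = 0 := by
    have : ((relR X C q : ℝ) : ℂ) = relPoly X C q := by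
      simp [relR, relPoly]
    rw [hq] at this
    exact_mod_cast this
  obtain ⟨r, hr⟩ := exists_hasRank hM
  have hlow : -1 ≤ q := by
    by_contra! h
    have := sign_of_lt_neg_one h _ X C r rfl hM hr
    simp [hR] at this
  have hup : q ≤ 1 := by
    by_contra! h
    have := sign_of_one_lt h _ X C r rfl hM hr
    simp [hR] at this
  refine ⟨?_, abs_le.2 ⟨hlow, hup⟩⟩
  rcases hup.eq_or_lt with h | h
  · exact Or.inr h
  · refine Or.inl ⟨hlow, ?_⟩
    by_contra! h0
    exact (relR_pos_of_nonneg_of_lt_one hM h0 h).ne' hR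
end

section
/- Let M be a matroid of rank 2 on a ground set of m ≥ 4 elements with no loops and no coloops. Then M has at least 2m−4 faces of cardinality 2, i.e., F₂ ≥ 2m−4. -/
/-!
The 2-faces of a loopless rank-2 matroid form a complete multipartite graph: by exchange,
non-adjacency is an equivalence relation on the ground set (`edge_left_or_right`). Let `P` be the
class of some vertex `v` and `Q` its complement. All pairs in `P × Q` are edges. No class
contains an edge and, there being no coloops, every vertex is avoided by some edge
(`exists_edge_avoiding`), so `2 ≤ |Q|`.

If some class has `|P| ≥ 2`, then the number of edges is at least `|P| * |Q| ≥ 2 * (m - 2)`,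
because `(|P| - 2) * (|Q| - 2) ≥ 0`. If all classes are singletons, the graph is complete, and
`m * (m - 1) / 2 ≥ 2 * m - 4`.
-/

open Finset

/-- A facet is a maximal face. -/
def IsFacet {α : Type*} [DecidableEq α] (C : Finset (Finset α)) (F : Finset α) : Prop :=
  F ∈ C ∧ ∀ G ∈ C, F ⊆ G → F = G

/-- `faceCount C i` is the number of faces of cardinality `i` (the entry `F_i` of the F-vector). -/
def faceCount {α : Type*} [DecidableEq α] (C : Finset (Finset α)) (i : ℕ) : ℕ :=
  (C.filter fun F => F.card = i).card

/-- Every vertex is joined to at least one end of any edge, by exchange.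
Inequality of the two ends is recorded, since `{v, v} = {v}` is itself a face. -/
lemma edge_left_or_right {α : Type*} [DecidableEq α] {X : Finset α} {C : Finset (Finset α)}
    (hM : IsMatroidC X C) {v x y : α} (hv : {v} ∈ C) (hxy : x ≠ y) (h : {x, y} ∈ C) :
    (v ≠ x ∧ {v, x} ∈ C) ∨ (v ≠ y ∧ {v, y} ∈ C) := by
  obtain ⟨z, hz, hzv, hzC⟩ := hM.2.2 {v} hv {x, y} h (by
    rw [card_pair hxy, card_singleton]; omega)
  rw [mem_singleton] at hzv
  rw [Finset.pair_comm] at hzC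
  rcases mem_insert.1 hz with rfl | hz
  · exact Or.inl ⟨Ne.symm hzv, hzC⟩
  · rw [mem_singleton] at hz
    subst hz
    exact Or.inr ⟨Ne.symm hzv, hzC⟩

/-- Facets of a rank-2 matroid are edges, so a vertex that is not a coloop is avoided by an edge. -/
lemma exists_edge_avoiding {α : Type*} [DecidableEq α] {X : Finset α} {C : Finset (Finset α)}
    (hM : IsMatroidC X C) (hrank : (∀ F ∈ C, F.card ≤ 2) ∧ ∃ F ∈ C, F.card = 2) {w : α}
    (hw : ∃ F, IsFacet C F ∧ w ∉ F) :
    ∃ x y, x ≠ y ∧ {x, y} ∈ C ∧ w ≠ x ∧ w ≠ y := by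
  obtain ⟨F, ⟨hF, hmax⟩, hwF⟩ := hw
  obtain ⟨E, hE, hE2⟩ := hrank.2
  have hF2 : F.card = 2 := by
    refine le_antisymm (hrank.1 F hF) (not_lt.1 fun hlt => ?_)
    obtain ⟨z, -, hzF, hzC⟩ := hM.2.2 F hF E hE (by omega)
    exact hzF (by rw [hmax _ hzC (subset_insert z F)]; exact mem_insert_self z F)
  obtain ⟨x, y, hxy, rfl⟩ := card_eq_two.1 hF2
  simp only [mem_insert, mem_singleton, not_or] at hwF
  exact ⟨x, y, hxy, hF, hwF.1, hwF.2⟩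

/-- A complete bipartite graph contained in the 2-faces contributes `|P| * |Q|` of them. -/
lemma card_mul_card_le_faceCount {α : Type*} [DecidableEq α] {C : Finset (Finset α)}
    {P Q : Finset α} (hd : Disjoint P Q) (h : ∀ p ∈ P, ∀ q ∈ Q, {p, q} ∈ C) :
    P.card * Q.card ≤ faceCount C 2 := by
  rw [← card_product]
  refine card_le_card_of_injOn (fun a => {a.1, a.2}) ?_ ?_
  · rintro ⟨p, q⟩ ha
    obtain ⟨hp, hq⟩ := mem_product.1 (mem_coe.1 ha)
    exact mem_coe.2 (mem_filter.2 ⟨h p hp q hq, card_pair (disjoint_iff_ne.1 hd p hp q hq)⟩)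
  · rintro ⟨p, q⟩ ha ⟨p', q'⟩ hb hab
    obtain ⟨hp, hq⟩ := mem_product.1 (mem_coe.1 ha)
    obtain ⟨hp', hq'⟩ := mem_product.1 (mem_coe.1 hb)
    have hpq' := disjoint_iff_ne.1 hd p hp q' hq'
    have hp'q := disjoint_iff_ne.1 hd p' hp' q hq
    simp only at hab
    have h1 : p ∈ ({p', q'} : Finset α) := hab ▸ mem_insert_self p {q}
    have h2 : q ∈ ({p', q'} : Finset α) := hab ▸ mem_insert_of_mem (mem_singleton_self q)
    simp only [mem_insert, mem_singleton] at h1 h2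
    grind

/-- a rank-2 matroid on `m ≥ 4` elements with no loops and no coloops has at
least `2m - 4` faces of cardinality 2. -/
theorem rank2_matroid_F2_lower_bound {α : Type*} [DecidableEq α]
    (X : Finset α) (C : Finset (Finset α)) (m : ℕ) (hm : 4 ≤ m) (hX : X.card = m)
    (hM : IsMatroidC X C)
    (hrank : (∀ F ∈ C, F.card ≤ 2) ∧ ∃ F ∈ C, F.card = 2)
    (hloopless : ∀ x ∈ X, ∃ F ∈ C, x ∈ F)
    (hcoloopless : ∀ x ∈ X, ∃ F, IsFacet C F ∧ x ∉ F) :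
    2 * m - 4 ≤ faceCount C 2 := by
  have hsing : ∀ x ∈ X, ({x} : Finset α) ∈ C := fun x hx => by
    obtain ⟨F, hF, hxF⟩ := hloopless x hx
    exact hM.1.2 F hF _ (singleton_subset_iff.2 hxF)
  have hmem : ∀ {x y : α}, {x, y} ∈ C → x ∈ X ∧ y ∈ X := fun {x y} h =>
    ⟨hM.1.1 _ h (by simp), hM.1.1 _ h (by simp)⟩
  by_cases hall : ∀ x ∈ X, ∀ y ∈ X, x ≠ y → {x, y} ∈ C
  · have hsub : X.powersetCard 2 ⊆ C.filter fun F => F.card = 2 := by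
      intro F hF
      obtain ⟨hFX, hF2⟩ := mem_powersetCard.1 hF
      obtain ⟨x, y, hxy, rfl⟩ := card_eq_two.1 hF2
      exact mem_filter.2 ⟨hall x (hFX (by simp)) y (hFX (by simp)) hxy, hF2⟩
    have hle := card_le_card hsub
    rw [card_powersetCard, hX, Nat.choose_two_right] at hle
    refine le_trans ?_ hle
    rw [Nat.le_div_iff_mul_le (by norm_num)]
    obtain ⟨k, rfl⟩ := Nat.exists_eq_add_of_le hm
    have e1 : 2 * (4 + k) - 4 = 2 * k + 4 := by omega
    have e2 : 4 + k - 1 = k + 3 := by omega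
    rw [e1, e2]
    nlinarith
  · push Not at hall
    obtain ⟨v, hv, u, hu, hvu, hvuC⟩ := hall
    -- `Q` is the neighbourhood of `v`, and `X \ Q` is the non-adjacency class of `v`.
    set Q := X.filter fun x => v ≠ x ∧ {v, x} ∈ C with hQ
    have hQX : Q ⊆ X := filter_subset _ _
    have hedge : ∀ {x y : α}, x ≠ y → {x, y} ∈ C → x ∈ Q ∨ y ∈ Q := fun {x y} hxy h =>
      (edge_left_or_right hM (hsing v hv) hxy h).imp
        (fun h' => mem_filter.2 ⟨(hmem h).1, h'⟩) (fun h' => mem_filter.2 ⟨(hmem h).2, h'⟩)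
    have havoid : ∀ w ∈ X, ∃ q ∈ Q, w ≠ q := fun w hw => by
      obtain ⟨x, y, hxy, h, hwx, hwy⟩ := exists_edge_avoiding hM hrank (hcoloopless w hw)
      rcases hedge hxy h with hq | hq
      exacts [⟨x, hq, hwx⟩, ⟨y, hq, hwy⟩]
    have hQ2 : 2 ≤ Q.card := by
      obtain ⟨q, hq, -⟩ := havoid v hv
      obtain ⟨q', hq', hne⟩ := havoid q (hQX hq)
      exact one_lt_card.2 ⟨q, hq, q', hq', hne⟩
    have hP2 : 2 ≤ (X \ Q).card :=
      one_lt_card.2 ⟨v, by simp [hQ, hv], u, by simp [hQ, hu, hvuC], hvu⟩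
    have hbip : ∀ p ∈ X \ Q, ∀ q ∈ Q, {p, q} ∈ C := fun p hp q hq => by
      obtain ⟨hpX, hpQ⟩ := mem_sdiff.1 hp
      obtain ⟨-, hvq, hC⟩ := mem_filter.1 hq
      rcases edge_left_or_right hM (hsing p hpX) hvq hC with ⟨hpv, h⟩ | ⟨-, h⟩
      · exact absurd (mem_filter.2 ⟨hpX, hpv.symm, by rwa [Finset.pair_comm]⟩) hpQ
      · exact h
    refine le_trans ?_ (card_mul_card_le_faceCount sdiff_disjoint hbip)
    have hsum : (X \ Q).card + Q.card = m := by rw [card_sdiff_add_card_eq_card hQX, hX]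
    obtain ⟨a, ha⟩ := Nat.exists_eq_add_of_le hP2
    obtain ⟨b, hb⟩ := Nat.exists_eq_add_of_le hQ2
    rw [ha, hb] at hsum ⊢
    have e : 2 * m - 4 = 2 * a + 2 * b + 4 := by omega
    rw [e]
    nlinarith [Nat.zero_le (a * b)]
end

section
/- Let M be a connected matroid of rank 3 on a ground set of m ≥ 6 elements with no loops and no coloops, and let ⟨H₀,H₁,H₂,H₃⟩ be its H-vector (so H₀ = 1 and H₁ = m−3). Then H₃² − 1 + H₂ − H₁H₃ ≥ 0. -/
/-!
The proof is an induction on the number of elements, deleting one element at a time.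

Write `F₂, F₃` for the numbers of faces with two and three elements. Then `H₁ = m - 3`,
`H₂ = F₂ - 2m + 3` and `H₃ = F₃ - F₂ + m - 1`. For every loopless and coloopless matroid of rank
`3` the following holds (`R3.inv`): `H₃ ≥ H₁ - 2`, `H₂ ≥ H₁`, and if `H₃ = H₁ - 2`, then moreover
`H₂ ≥ 2H₁ - 3` and every element lies in at least four faces of size two. The inequality follows
by arithmetic in the three cases `H₃ ≥ H₁`, `H₃ = H₁ - 1`, `H₃ = H₁ - 2`.

*Inductive step* (`R3.Inv_step`). If deleting `e` creates no coloop, then `F₂` drops by the number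
`N e` of pairs at `e`, and `F₃` by the number `B e` of bases at `e`. As there are no coloops, each
independent pair lies in at least two bases, so `N e ≤ B e` by double counting (`R3.Good.N_le_B`) and
`H₃ - H₁` does not drop when `e` is put back. Also `N e ≥ 3`, and `N e ≥ 4` in the critical case,
because otherwise `e` has a parallel element `e'`, and `N e' = N e`.

*Base case* (`R3.Inv_base`). Otherwise every element `x` has a series partner `x'`: each basis
contains `x` or `x'`. A series pair is joined by faces to every element outside it (`R3.Good.series`),
so `N x ≥ m - 2`. Partners of the elements outside a fixed basis lie in that basis and are distinct
(`R3.Good.partner_inj`), so `m ≤ 6`, and the cases `m = 4, 5, 6` follow from `2 F₂ = ∑ N x` and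
`2 F₂ ≤ 3 F₃`, together with one dependent pair for `m = 6` and two elements that are parallel to
no other for `m = 5`.
-/

open Finset

/-- A complex on ground set `X` is connected if it cannot be written as the sum of two
complexes on disjoint nonempty ground sets (i.e. the ground set cannot be split into two
nonempty parts with every face lying inside one of the parts). -/
def ConnectedComplex {α : Type*} [DecidableEq α] (X : Finset α) (C : Finset (Finset α)) : Prop :=
  ¬∃ X₁ X₂ : Finset α, X₁.Nonempty ∧ X₂.Nonempty ∧ Disjoint X₁ X₂ ∧ X₁ ∪ X₂ = X ∧
    ∀ F ∈ C, F ⊆ X₁ ∨ F ⊆ X₂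

/-- The H-polynomial of a complex of dimension `d`:
`h_C(q) = (1-q)^d Σ F_i (q/(1-q))^i = Σ_F q^|F| (1-q)^(d-|F|)`. -/
noncomputable def hPoly {α : Type*} [DecidableEq α] (C : Finset (Finset α)) (d : ℕ)
    (q : ℂ) : ℂ :=
  ∑ F ∈ C, q ^ F.card * (1 - q) ^ (d - F.card)

namespace R3

/-! ### Matroids, face numbers and the invariant -/

variable {α : Type*} [DecidableEq α]

/-- Loopless and coloopless matroids of rank `3` on `X`, given by their independent sets, with
bases as faces of size `3`. -/
structure Good (X : Finset α) (C : Finset (Finset α)) : Prop where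
  sub : ∀ F ∈ C, F ⊆ X
  down : ∀ F ∈ C, ∀ G ⊆ F, G ∈ C
  exch : ∀ σ ∈ C, ∀ τ ∈ C, σ.card < τ.card → ∃ z ∈ τ, z ∉ σ ∧ insert z σ ∈ C
  le3 : ∀ F ∈ C, F.card ≤ 3
  basis : ∃ F ∈ C, F.card = 3
  loopless : ∀ x ∈ X, {x} ∈ C
  coloopless : ∀ x ∈ X, ∃ F ∈ C, F.card = 3 ∧ x ∉ F

/-- The faces of size `k`. -/
def fc (C : Finset (Finset α)) (k : ℕ) : Finset (Finset α) := C.filter (fun F => F.card = k)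

/-- The faces of size `k` containing `e`. -/
def star (C : Finset (Finset α)) (k : ℕ) (e : α) : Finset (Finset α) :=
  (fc C k).filter (fun F => e ∈ F)

/-- The elements forming a face of size two with `e`, that is, the other elements that are not
parallel to `e`. -/
def nb (X : Finset α) (C : Finset (Finset α)) (e : α) : Finset α :=
  X.filter (fun y => y ≠ e ∧ {e, y} ∈ C)

/-- The faces avoiding `e`: the independent sets of the deletion. -/
def del (C : Finset (Finset α)) (e : α) : Finset (Finset α) := C.filter (fun F => e ∉ F)

/-- The inductive invariant: `H₃ ≥ H₁ - 2`, `H₂ ≥ H₁`, and if `H₃ = H₁ - 2` then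
`H₂ ≥ 2H₁ - 3` and each element lies in four independent pairs; all written in terms of
face numbers, without subtraction. -/
def Inv (X : Finset α) (C : Finset (Finset α)) : Prop :=
  (fc C 2).card ≤ (fc C 3).card + 4 ∧ 3 * X.card ≤ (fc C 2).card + 6 ∧
    ((fc C 2).card = (fc C 3).card + 4 → 4 * X.card ≤ (fc C 2).card + 12 ∧
      ∀ x ∈ X, 4 ≤ (nb X C x).card)

variable {X : Finset α} {C : Finset (Finset α)}

/-! ### Augmentation and basis exchange -/

lemma Good.ext (h : Good X C) {σ : Finset α} (hσ : σ ∈ C) :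
    ∃ F ∈ C, F.card = 3 ∧ σ ⊆ F := by
  obtain ⟨B, hB, hB3⟩ := h.basis
  induction hn : 3 - σ.card generalizing σ with
  | zero => exact ⟨σ, hσ, by have := h.le3 σ hσ; omega, Finset.Subset.refl _⟩
  | succ n ih =>
    obtain ⟨z, -, hz, hzC⟩ := h.exch σ hσ B hB (by omega)
    obtain ⟨F, hF, h3, hs⟩ := ih hzC (by rw [card_insert_of_notMem hz]; omega)
    exact ⟨F, hF, h3, (subset_insert _ _).trans hs⟩

lemma Good.swap (h : Good X C) {F : Finset α} (hF : F ∈ C) (h3 : F.card = 3) {a : α}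
    (ha : a ∈ F) : ∃ z, z ∉ F ∧ insert z (F.erase a) ∈ C := by
  obtain ⟨G, hG, hG3, haG⟩ := h.coloopless a (h.sub F hF ha)
  obtain ⟨z, hzG, hz, hzC⟩ := h.exch (F.erase a) (h.down F hF _ (erase_subset _ _)) G hG
    (by rw [card_erase_of_mem ha]; omega)
  refine ⟨z, fun hzF => hz (mem_erase.2 ⟨?_, hzF⟩), hzC⟩
  rintro rfl
  exact haG hzG

lemma card_swap {F : Finset α} (h3 : F.card = 3) {a z : α} (ha : a ∈ F) (hz : z ∉ F) :
    (insert z (F.erase a)).card = 3 := by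
  rw [card_insert_of_notMem (fun hh => hz (mem_of_mem_erase hh)), card_erase_of_mem ha, h3]

lemma Good.pair_mem (h : Good X C) {F : Finset α} (hF : F ∈ C) {x y : α} (hx : x ∈ F)
    (hy : y ∈ F) : ({x, y} : Finset α) ∈ C :=
  h.down F hF _ (by intro t; simp only [mem_insert, mem_singleton]; rintro (rfl | rfl) <;> assumption)

/-- Exchanging the element `y` of a series pair `y, y'` out of a basis leaves a basis that
contains `y'`. -/
lemma Good.series_aux (h : Good X C) {x y y' : α} {F : Finset α}
    (hs : ∀ F ∈ C, F.card = 3 → y ∈ F ∨ y' ∈ F)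
    (hF : F ∈ C) (h3 : F.card = 3) (hx : x ∈ F) (hxy : x ≠ y) (hy : y ∈ F) :
    ({x, y'} : Finset α) ∈ C := by
  obtain ⟨z, hz, hzC⟩ := h.swap hF h3 hy
  rcases hs _ hzC (card_swap h3 hy hz) with h1 | h1
  · rw [mem_insert] at h1
    rcases h1 with rfl | h1
    · exact absurd hy hz
    · exact absurd h1 (notMem_erase _ _)
  · exact h.pair_mem hzC (mem_insert_of_mem (mem_erase.2 ⟨hxy, hx⟩)) h1

/-- Every element outside a series pair `y, y'` is parallel to neither `y` nor `y'`. -/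
lemma Good.series (h : Good X C) {x y y' : α} (hx : x ∈ X)
    (hs : ∀ F ∈ C, F.card = 3 → y ∈ F ∨ y' ∈ F) (hxy : x ≠ y) (hxy' : x ≠ y') :
    ({x, y} : Finset α) ∈ C ∧ ({x, y'} : Finset α) ∈ C := by
  obtain ⟨F, hF, h3, hxF⟩ := h.ext (h.loopless x hx)
  rw [singleton_subset_iff] at hxF
  rcases hs F hF h3 with h1 | h1
  · exact ⟨h.pair_mem hF hxF h1, h.series_aux hs hF h3 hxF hxy h1⟩
  · exact ⟨h.series_aux (fun F hF h3 => (hs F hF h3).symm) hF h3 hxF hxy' h1,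
      h.pair_mem hF hxF h1⟩

/-! ### Double counting -/

lemma Good.card_star_two (h : Good X C) (e : α) : (star C 2 e).card = (nb X C e).card := by
  symm
  refine card_bij (fun y _ => {e, y}) ?_ ?_ ?_
  · intro y hy
    simp only [nb, mem_filter] at hy
    simp only [star, fc, mem_filter]
    exact ⟨⟨hy.2.2, card_pair hy.2.1.symm⟩, by simp⟩
  · intro y hy z hz hyz
    simp only [nb, mem_filter] at hy hz
    have : y ∈ ({e, z} : Finset α) := hyz ▸ (by simp)
    simp only [mem_insert, mem_singleton] at this
    exact this.resolve_left hy.2.1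
  · intro F hF
    simp only [star, fc, mem_filter] at hF
    obtain ⟨⟨hF, h2⟩, he⟩ := hF
    have h1 : (F.erase e).card = 1 := by rw [card_erase_of_mem he, h2]
    obtain ⟨y, hy⟩ := card_eq_one.1 h1
    have hFe : ({e, y} : Finset α) = F := by rw [← insert_erase he, hy]
    have hyF : y ∈ F.erase e := by rw [hy]; simp
    refine ⟨y, ?_, hFe⟩
    simp only [nb, mem_filter]
    exact ⟨h.sub F hF (mem_of_mem_erase hyF), ne_of_mem_erase hyF, hFe ▸ hF⟩

lemma Good.sum_nb (h : Good X C) : ∑ x ∈ X, (nb X C x).card = 2 * (fc C 2).card := by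
  have h1 : ∀ x ∈ X, (nb X C x).card = ((fc C 2).filter (fun F => x ∈ F)).card :=
    fun x _ => (h.card_star_two x).symm
  rw [sum_congr rfl h1, mul_comm]
  have := sum_card_bipartiteAbove_eq_sum_card_bipartiteBelow
    (s := X) (t := fc C 2) (fun x F => x ∈ F)
  simp only [bipartiteAbove, bipartiteBelow] at this
  rw [this, card_eq_sum_ones, sum_mul]
  refine sum_congr rfl fun F hF => ?_
  simp only [fc, mem_filter] at hF
  rw [filter_mem_eq_inter, inter_eq_right.2 (h.sub F hF.1), hF.2, one_mul]

/-- Every independent pair lies in at least two bases. -/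
lemma Good.two_le_above (h : Good X C) {G : Finset α} (hG : G ∈ fc C 2) :
    2 ≤ ((fc C 3).filter (fun F => G ⊆ F)).card := by
  simp only [fc, mem_filter] at hG
  obtain ⟨F, hF, h3, hGF⟩ := h.ext hG.1
  obtain ⟨a, haF, haG⟩ := exists_mem_notMem_of_card_lt_card (s := G) (t := F) (by omega)
  obtain ⟨z, hz, hzC⟩ := h.swap hF h3 haF
  have hne : F ≠ insert z (F.erase a) := fun hh => hz (by rw [hh]; simp)
  rw [← card_pair hne]
  apply card_le_card
  intro T
  simp only [mem_insert, mem_singleton, fc, mem_filter]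
  rintro (rfl | rfl)
  · exact ⟨⟨hF, h3⟩, hGF⟩
  · refine ⟨⟨hzC, card_swap h3 haF hz⟩, fun t ht => mem_insert_of_mem (mem_erase.2 ⟨?_, hGF ht⟩)⟩
    rintro rfl
    exact haG ht

lemma Good.two_F2_le (h : Good X C) : 2 * (fc C 2).card ≤ 3 * (fc C 3).card := by
  have := card_mul_le_card_mul (s := fc C 2) (t := fc C 3) (m := 2) (n := 3) (fun G F => G ⊆ F)
    (fun G hG => ?_) (fun F hF => ?_)
  · omega
  · exact h.two_le_above hG
  · simp only [fc, mem_filter] at hF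
    calc (bipartiteBelow (fun G F => G ⊆ F) (fc C 2) F).card ≤ (powersetCard 2 F).card := by
          apply card_le_card
          intro G
          simp only [bipartiteBelow, fc, mem_filter, mem_powersetCard]
          tauto
      _ = 3 := by rw [card_powersetCard, hF.2]; rfl

/-- The link of `e` is a graph of minimum degree at least two, so it has at least as many edges
as vertices. -/
lemma Good.N_le_B (h : Good X C) (e : α) : (star C 2 e).card ≤ (star C 3 e).card := by
  have := card_mul_le_card_mul (s := star C 2 e) (t := star C 3 e) (m := 2) (n := 2)
    (fun G F => G ⊆ F) (fun G hG => ?_) (fun F hF => ?_)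
  · omega
  · simp only [star, mem_filter] at hG
    refine (h.two_le_above hG.1).trans (card_le_card ?_)
    intro F
    simp only [bipartiteAbove, star, mem_filter]
    exact fun hF => ⟨⟨hF.1, hF.2 hG.2⟩, hF.2⟩
  · simp only [star, fc, mem_filter] at hF
    have h2 : (F.erase e).card = 2 := by rw [card_erase_of_mem hF.2, hF.1.2]
    rw [← h2]
    -- A pair `{e, y}` inside `F` is recovered from `F` and the third element of `F`.
    refine (card_le_card ?_).trans (card_image_le (s := F.erase e) (f := fun y => F.erase y))
    intro G
    simp only [bipartiteBelow, star, fc, mem_filter, mem_image]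
    rintro ⟨⟨⟨-, hG2⟩, heG⟩, hGF⟩
    obtain ⟨y, hyF, hyG⟩ := exists_mem_notMem_of_card_lt_card (s := G) (t := F) (by omega)
    refine ⟨y, mem_erase.2 ⟨fun hh => hyG (hh ▸ heG), hyF⟩, ?_⟩
    refine (eq_of_subset_of_card_le (fun t ht => mem_erase.2 ⟨?_, hGF ht⟩) ?_).symm
    · rintro rfl
      exact hyG ht
    · rw [card_erase_of_mem hyF]; omega

lemma nb_card_le {x : α} (hx : x ∈ X) : (nb X C x).card + 1 ≤ X.card := by
  rw [← card_erase_add_one hx]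
  gcongr
  intro y
  simp only [nb, mem_filter, mem_erase]
  tauto

lemma Good.three_le_nb (h : Good X C) {x : α} (hx : x ∈ X) : 3 ≤ (nb X C x).card := by
  obtain ⟨F, hF, h3, hxF⟩ := h.ext (h.loopless x hx)
  rw [singleton_subset_iff] at hxF
  have h2 : (F.erase x).card = 2 := by rw [card_erase_of_mem hxF, h3]
  obtain ⟨a, ha⟩ := card_pos.1 (by omega : 0 < (F.erase x).card)
  obtain ⟨z, hz, hzC⟩ := h.swap hF h3 (mem_of_mem_erase ha)
  have : (insert z (F.erase x)).card = 3 := card_swap h3 hxF hz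
  rw [← this]
  apply card_le_card
  intro y
  simp only [mem_insert, mem_erase, nb, mem_filter]
  rintro (rfl | ⟨hyx, hyF⟩)
  · exact ⟨h.sub _ hzC (mem_insert_self _ _), fun hh => hz (hh ▸ hxF),
      h.pair_mem hzC (mem_insert_of_mem (mem_erase.2 ⟨(ne_of_mem_erase ha).symm, hxF⟩))
        (mem_insert_self _ _)⟩
  · exact ⟨h.sub _ hF hyF, hyx, h.pair_mem hF hxF hyF⟩

lemma Good.four_le (h : Good X C) : 4 ≤ X.card := by
  obtain ⟨B, hB, hB3⟩ := h.basis
  obtain ⟨x, hx⟩ := card_pos.1 (by omega : 0 < B.card)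
  have := nb_card_le (C := C) (h.sub B hB hx)
  have := h.three_le_nb (h.sub B hB hx)
  omega

/-! ### Deleting an element -/

lemma Good.del (h : Good X C) {e : α}
    (hdel : ∀ x ∈ X, x ≠ e → ∃ F ∈ C, F.card = 3 ∧ x ∉ F ∧ e ∉ F)
    (he : e ∈ X) : Good (X.erase e) (del C e) where
  sub F hF := by
    simp only [R3.del, mem_filter] at hF
    exact fun t ht => mem_erase.2 ⟨fun hh => hF.2 (hh ▸ ht), h.sub F hF.1 ht⟩
  down F hF G hG := by
    simp only [R3.del, mem_filter] at hF ⊢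
    exact ⟨h.down F hF.1 G hG, fun hh => hF.2 (hG hh)⟩
  exch σ hσ τ hτ hlt := by
    simp only [R3.del, mem_filter] at hσ hτ ⊢
    obtain ⟨z, hz, hzσ, hzC⟩ := h.exch σ hσ.1 τ hτ.1 hlt
    refine ⟨z, hz, hzσ, hzC, ?_⟩
    rw [mem_insert, not_or]
    exact ⟨fun hh => hτ.2 (hh ▸ hz), hσ.2⟩
  le3 F hF := h.le3 F (mem_filter.1 hF).1
  basis := by
    obtain ⟨F, hF, h3, heF⟩ := h.coloopless e he
    exact ⟨F, mem_filter.2 ⟨hF, heF⟩, h3⟩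
  loopless x hx := by
    rw [mem_erase] at hx
    exact mem_filter.2 ⟨h.loopless x hx.2, by simpa using hx.1.symm⟩
  coloopless x hx := by
    rw [mem_erase] at hx
    obtain ⟨F, hF, h3, hxF, heF⟩ := hdel x hx.2 hx.1
    exact ⟨F, mem_filter.2 ⟨hF, heF⟩, h3, hxF⟩

lemma card_del (C : Finset (Finset α)) (k : ℕ) (e : α) :
    (fc C k).card = (fc (del C e) k).card + (star C k e).card := by
  rw [star, ← card_filter_add_card_filter_not (s := fc C k) (fun F => e ∈ F), add_comm]
  congr 2
  simp only [fc, del, filter_filter]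
  congr 1
  ext F
  tauto

lemma nb_del_le (e x : α) : (nb (X.erase e) (del C e) x).card ≤ (nb X C x).card := by
  apply card_le_card
  intro y
  simp only [nb, del, mem_filter, mem_erase]
  tauto

/-- Elements parallel to `e` have the same neighbours as `e`. -/
lemma Good.nb_parallel (h : Good X C) {e e' : α} (he' : e' ∈ X)
    (hp : ({e, e'} : Finset α) ∉ C) : nb X C e ⊆ nb X C e' := by
  intro a
  simp only [nb, mem_filter]
  rintro ⟨haX, hae, haC⟩
  have hae' : a ≠ e' := by rintro rfl; exact hp haC
  refine ⟨haX, hae', ?_⟩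
  obtain ⟨z, hz, -, hzC⟩ := h.exch {e'} (h.loopless e' he') {e, a} haC
    (by rw [card_singleton, card_pair hae.symm]; omega)
  simp only [mem_insert, mem_singleton] at hz
  rcases hz with rfl | rfl
  · exact absurd hzC hp
  · rw [pair_comm]; exact hzC

/-- The invariant passes from the deletion of `e` to the matroid: `F₂` grows by the number of pairs
at `e`, and `F₃` by the number of bases at `e`, which is at least as large. -/
lemma Inv_step (h : Good X C) {e : α} (he : e ∈ X) (hd : Good (X.erase e) (del C e))
    (hi : Inv (X.erase e) (del C e)) : Inv X C := by
  obtain ⟨h1, h2, h3⟩ := hi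
  have c2 := card_del C 2 e
  have c3 := card_del C 3 e
  have hNB := h.N_le_B e
  have hN := h.card_star_two e
  have hN3 := h.three_le_nb he
  have hm := card_erase_add_one he
  refine ⟨by omega, by omega, fun heq => ?_⟩
  obtain ⟨h4, h5⟩ := h3 (by omega)
  have key : 4 ≤ (nb X C e).card := by
    by_contra hlt
    have hm4 := hd.four_le
    -- Otherwise fewer than `m - 1` elements are neighbours of `e`, so some `e'` is parallel to it.
    obtain ⟨e', he', hne'⟩ := exists_mem_notMem_of_card_lt_card
      (s := nb X C e) (t := X.erase e) (by omega)
    have he'X := mem_of_mem_erase he'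
    have hp : ({e, e'} : Finset α) ∉ C := fun hh =>
      hne' (by simp only [nb, mem_filter]; exact ⟨he'X, ne_of_mem_erase he', hh⟩)
    have hle := card_le_card (h.nb_parallel (e := e') he (by rwa [pair_comm]))
    have := h5 e' he'
    have := nb_del_le (X := X) (C := C) e e'
    omega
  refine ⟨by omega, fun x hx => ?_⟩
  by_cases hxe : x = e
  · rw [hxe]; exact key
  · exact (h5 x (mem_erase.2 ⟨hxe, hx⟩)).trans (nb_del_le e x)

/-! ### Matroids in which every element has a series partner -/

/-- Two elements outside a basis `B` cannot be in series with the same element of `B`. -/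
lemma Good.partner_inj (h : Good X C) {B : Finset α} (hB : B ∈ C) (hB3 : B.card = 3)
    {x y f : α} (hxB : x ∉ B) (hyB : y ∉ B) (hf : f ∈ B)
    (hx : ∀ F ∈ C, F.card = 3 → f ∈ F ∨ x ∈ F)
    (hy : ∀ F ∈ C, F.card = 3 → f ∈ F ∨ y ∈ F) : x = y := by
  obtain ⟨z, hz, hzC⟩ := h.swap hB hB3 hf
  have hfz : f ∉ insert z (B.erase f) := by
    rw [mem_insert, not_or]
    exact ⟨fun hh => hz (hh ▸ hf), notMem_erase _ _⟩
  have h1 := (hx _ hzC (card_swap hB3 hf hz)).resolve_left hfz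
  have h2 := (hy _ hzC (card_swap hB3 hf hz)).resolve_left hfz
  rw [mem_insert, mem_erase] at h1 h2
  rw [h1.resolve_right fun hh => hxB hh.2, h2.resolve_right fun hh => hyB hh.2]

/-- The invariant holds if no element can be deleted without creating a coloop, that is, if every
element has a series partner; such a matroid has at most six elements. -/
lemma Inv_base (h : Good X C)
    (hmin : ∀ e ∈ X, ∃ x ∈ X, x ≠ e ∧ ∀ F ∈ C, F.card = 3 → x ∈ F ∨ e ∈ F) : Inv X C := by
  choose! p hpX hpne hps using hmin
  have hm4 := h.four_le
  have hsum := h.sum_nb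
  have h23 := h.two_F2_le
  -- `p x` is the only element that can be parallel to `x`.
  have hN : ∀ x ∈ X, X.card ≤ (nb X C x).card + 2 := by
    intro x hx
    have h1 := card_erase_add_one hx
    have h2 := card_erase_add_one (mem_erase.2 ⟨hpne x hx, hpX x hx⟩)
    have : ((X.erase x).erase (p x)).card ≤ (nb X C x).card := by
      apply card_le_card
      intro y
      simp only [nb, mem_filter, mem_erase]
      rintro ⟨hyp, hyx, hyX⟩
      refine ⟨hyX, hyx, ?_⟩
      rw [pair_comm]
      exact (h.series hyX (hps x hx) hyp hyx).2
    omega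
  have hup : 2 * (fc C 2).card + X.card ≤ X.card * X.card := by
    rw [← hsum]
    calc ∑ x ∈ X, (nb X C x).card + X.card = ∑ x ∈ X, ((nb X C x).card + 1) := by
          rw [sum_add_distrib]; simp
      _ ≤ ∑ x ∈ X, X.card := sum_le_sum fun x hx => nb_card_le hx
      _ = X.card * X.card := by simp
  have hlow : X.card * X.card ≤ 2 * (fc C 2).card + 2 * X.card := by
    rw [← hsum]
    calc X.card * X.card = ∑ x ∈ X, X.card := by simp
      _ ≤ ∑ x ∈ X, ((nb X C x).card + 2) := sum_le_sum hN
      _ = _ := by rw [sum_add_distrib]; simp [mul_comm]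
  obtain ⟨B, hB, hB3⟩ := h.basis
  have hBX := h.sub B hB
  have hout : ∀ x ∈ X \ B, p x ∈ B := by
    intro x hx
    rw [mem_sdiff] at hx
    exact (hps x hx.1 B hB hB3).resolve_right hx.2
  have hinj : Set.InjOn p (X \ B : Finset α) := by
    intro x hx y hy hxy
    rw [mem_coe] at hx hy
    have hpx := hout x hx
    rw [mem_sdiff] at hx hy
    exact h.partner_inj hB hB3 hx.2 hy.2 hpx (hps x hx.1) (hxy ▸ hps y hy.1)
  have hcard : (X \ B).card + 3 = X.card := by
    rw [← hB3]; exact card_sdiff_add_card_eq_card hBX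
  have hm6 : (X \ B).card ≤ 3 := by
    rw [← hB3]; exact card_le_card_of_injOn p hout hinj
  have hcases : X.card = 4 ∨ X.card = 5 ∨ X.card = 6 := by omega
  rcases hcases with hm | hm | hm
  · have : 3 * X.card ≤ ∑ x ∈ X, (nb X C x).card := by
      rw [mul_comm, ← smul_eq_mul]
      exact card_nsmul_le_sum _ _ _ fun x hx => h.three_le_nb hx
    rw [hm] at hup hlow this
    exact ⟨by omega, by omega, fun heq => by omega⟩
  · -- The element `c` of `B` that is no partner of an element outside `B`, and the partner `p c`,
    -- are parallel to no other element.
    have hlt : ((X \ B).image p).card < B.card := card_image_le.trans_lt (by omega)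
    obtain ⟨c, hcB, hc⟩ := exists_mem_notMem_of_card_lt_card hlt
    have hcX := hBX hcB
    have hcall : ∀ y ∈ X, y ≠ c → ({c, y} : Finset α) ∈ C := by
      intro y hy hyc
      by_cases hyB : y ∈ B
      · exact h.pair_mem hB hcB hyB
      · have hyo : y ∈ X \ B := mem_sdiff.2 ⟨hy, hyB⟩
        refine (h.series hcX (hps y hy) ?_ hyc.symm).2
        rintro hh
        exact hc (mem_image.2 ⟨y, hyo, hh.symm⟩)
    have hgX := hpX c hcX
    have hgc := hpne c hcX
    have hgall : ∀ y ∈ X, y ≠ p c → ({p c, y} : Finset α) ∈ C := by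
      intro y hy hyg
      rw [pair_comm]
      by_cases hyc : y = c
      · rw [hyc]; exact hcall _ hgX hgc
      · exact (h.series hy (hps c hcX) hyg hyc).1
    have full : ∀ x ∈ X, (∀ y ∈ X, y ≠ x → ({x, y} : Finset α) ∈ C) →
        4 ≤ (nb X C x).card := by
      intro x hx hall
      have h1 := card_erase_add_one hx
      have : (X.erase x).card ≤ (nb X C x).card := by
        apply card_le_card
        intro y
        simp only [nb, mem_filter, mem_erase]
        exact fun hy => ⟨hy.2, hy.1, hall y hy.2 hy.1⟩
      omega
    have f1 := full c hcX hcall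
    have f2 := full _ hgX hgall
    have s1 := add_sum_erase X (fun x => (nb X C x).card) hcX
    have hg' : p c ∈ X.erase c := mem_erase.2 ⟨hgc, hgX⟩
    have s2 := add_sum_erase (X.erase c) (fun x => (nb X C x).card) hg'
    have k1 := card_erase_add_one hcX
    have k2 := card_erase_add_one hg'
    have s3 : ((X.erase c).erase (p c)).card • 3 ≤
        ∑ x ∈ (X.erase c).erase (p c), (nb X C x).card :=
      card_nsmul_le_sum _ _ _ fun x hx =>
        h.three_le_nb (mem_of_mem_erase (mem_of_mem_erase hx))
    simp only [smul_eq_mul] at s1 s2 s3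
    rw [hm] at hup hlow
    exact ⟨by omega, by omega, fun heq => by omega⟩
  · -- The ground set consists of three disjoint series pairs, so each basis contains exactly one
    -- element of each; in particular each series pair is dependent.
    obtain ⟨x, y, z, hxy, hxz, hyz, hxyz⟩ := card_eq_three.1 (by omega : (X \ B).card = 3)
    have hx : x ∈ X \ B := by rw [hxyz]; simp
    have hy : y ∈ X \ B := by rw [hxyz]; simp
    have hz : z ∈ X \ B := by rw [hxyz]; simp
    have hxX := (mem_sdiff.1 hx).1
    have npxy : p x ≠ p y := fun hh => hxy (hinj hx hy hh)
    have npxz : p x ≠ p z := fun hh => hxz (hinj hx hz hh)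
    have npyz : p y ≠ p z := fun hh => hyz (hinj hy hz hh)
    have off : ∀ u ∈ X \ B, ∀ v ∈ X \ B, u ≠ p v := fun u hu v hv hh =>
      (mem_sdiff.1 hu).2 (hh ▸ hout v hv)
    have hdep : ({x, p x} : Finset α) ∉ C := by
      intro hC
      obtain ⟨F, hF, hF3, hsub⟩ := h.ext hC
      have hxF : x ∈ F := hsub (by simp)
      have hpF : p x ∈ F := hsub (by simp)
      have hc2 : ((F.erase x).erase (p x)).card = 1 := by
        rw [card_erase_of_mem (mem_erase.2 ⟨(off x hx x hx).symm, hpF⟩),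
          card_erase_of_mem hxF, hF3]
      obtain ⟨w, hw⟩ := card_eq_one.1 hc2
      have hw' : ∀ t ∈ F, t ≠ x → t ≠ p x → t = w := fun t ht h1 h2 =>
        mem_singleton.1 (hw ▸ mem_erase.2 ⟨h2, mem_erase.2 ⟨h1, ht⟩⟩)
      have ey : p y = w ∨ y = w := (hps y (mem_sdiff.1 hy).1 F hF hF3).imp
        (fun t => hw' _ t (off x hx y hy).symm npxy.symm)
        (fun t => hw' _ t hxy.symm (off y hy x hx))
      have ez : p z = w ∨ z = w := (hps z (mem_sdiff.1 hz).1 F hF hF3).imp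
        (fun t => hw' _ t (off x hx z hz).symm npxz.symm)
        (fun t => hw' _ t hxz.symm (off z hz x hx))
      rcases ey with ey | ey <;> rcases ez with ez | ez
      · exact npyz (ey.trans ez.symm)
      · exact off z hz y hy (ez.trans ey.symm)
      · exact off y hy z hz (ey.trans ez.symm)
      · exact hyz (ey.trans ez.symm)
    have hx4 : (nb X C x).card + 2 ≤ X.card := by
      have h1 := card_erase_add_one hxX
      have h2 := card_erase_add_one (mem_erase.2 ⟨hpne x hxX, hpX x hxX⟩)
      have : (nb X C x).card ≤ ((X.erase x).erase (p x)).card := by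
        apply card_le_card
        intro y
        simp only [nb, mem_filter, mem_erase]
        rintro ⟨hyX, hyx, hyC⟩
        refine ⟨?_, hyx, hyX⟩
        rintro rfl
        exact hdep hyC
      omega
    have s1 := add_sum_erase X (fun x => (nb X C x).card) hxX
    have k1 := card_erase_add_one hxX
    have s3 : ∑ x ∈ X.erase x, (nb X C x).card ≤ (X.erase x).card • 5 :=
      sum_le_card_nsmul _ _ _ fun u hu => by
        have := nb_card_le (C := C) (mem_of_mem_erase hu)
        omega
    simp only [smul_eq_mul] at s1 s3
    rw [hm] at hlow
    refine ⟨by omega, by omega, fun heq => ⟨by omega, fun u hu => ?_⟩⟩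
    have := hN u hu
    omega

theorem inv (h : Good X C) : Inv X C := by
  induction hn : X.card generalizing X C with
  | zero => have := h.four_le; omega
  | succ n ih =>
    by_cases hd : ∃ e ∈ X, ∀ x ∈ X, x ≠ e → ∃ F ∈ C, F.card = 3 ∧ x ∉ F ∧ e ∉ F
    · obtain ⟨e, he, hdel⟩ := hd
      have hg := h.del hdel he
      exact Inv_step h he hg (ih hg (by rw [card_erase_of_mem he]; omega))
    · push Not at hd
      refine Inv_base h fun e he => ?_
      obtain ⟨x, hx, hxe, hF⟩ := hd e he
      exact ⟨x, hx, hxe, fun F hFC h3 => or_iff_not_imp_left.2 (hF F hFC h3)⟩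

/-! ### The H-vector in terms of face numbers -/

lemma hPoly_eq (h : Good X C) (q : ℂ) :
    hPoly C 3 q = (1 - q) ^ 3 + X.card * (q * (1 - q) ^ 2) +
      (fc C 2).card * (q ^ 2 * (1 - q)) + (fc C 3).card * q ^ 3 := by
  have h0 : (fc C 0).card = 1 := by
    obtain ⟨B, hB, -⟩ := h.basis
    rw [card_eq_one]
    refine ⟨∅, ?_⟩
    ext F
    simp only [fc, mem_filter, card_eq_zero, mem_singleton]
    refine ⟨fun hh => hh.2, ?_⟩
    rintro rfl
    exact ⟨h.down B hB _ (empty_subset _), rfl⟩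
  have h1 : (fc C 1).card = X.card := by
    have : fc C 1 = X.image (fun x => ({x} : Finset α)) := by
      ext F
      simp only [fc, mem_filter, mem_image, card_eq_one]
      constructor
      · rintro ⟨hF, a, rfl⟩
        exact ⟨a, h.sub _ hF (mem_singleton_self a), rfl⟩
      · rintro ⟨a, ha, rfl⟩
        exact ⟨h.loopless a ha, a, rfl⟩
    rw [this, card_image_of_injective _ singleton_injective]
  have hmaps : ∀ F ∈ C, F.card ∈ Finset.range 4 := fun F hF => by
    have := h.le3 F hF
    rw [Finset.mem_range]; omega
  rw [hPoly, ← sum_fiberwise_of_maps_to hmaps]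
  have hk : ∀ k ∈ Finset.range 4, ∑ F ∈ C.filter (fun F => F.card = k),
      q ^ F.card * (1 - q) ^ (3 - F.card) = (fc C k).card * (q ^ k * (1 - q) ^ (3 - k)) := by
    intro k _
    rw [← nsmul_eq_mul]
    refine sum_eq_card_nsmul fun F hF => ?_
    rw [(mem_filter.1 hF).2]
  rw [sum_congr rfl hk]
  simp only [sum_range_succ, sum_range_zero, h0, h1]
  norm_num

end R3

/-- for a connected rank-3 matroid on `m ≥ 6` elements with no loops and no
coloops, the H-vector `⟨H₀,H₁,H₂,H₃⟩` satisfies `H₃² - 1 + H₂ - H₁H₃ ≥ 0`. -/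
theorem rank3_matroid_H_inequality {α : Type*} [DecidableEq α]
    (X : Finset α) (C : Finset (Finset α)) (m : ℕ) (hm : 6 ≤ m) (hX : X.card = m)
    (hM : IsMatroidC X C) (hconn : ConnectedComplex X C)
    (hrank : (∀ F ∈ C, F.card ≤ 3) ∧ ∃ F ∈ C, F.card = 3)
    (hloopless : ∀ x ∈ X, ∃ F ∈ C, x ∈ F)
    (hcoloopless : ∀ x ∈ X, ∃ F, IsFacet C F ∧ x ∉ F)
    (H : ℕ → ℤ)
    (hH : ∀ q : ℂ, hPoly C 3 q = ∑ k ∈ Finset.range 4, (H k : ℂ) * q ^ k) :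
    0 ≤ H 3 ^ 2 - 1 + H 2 - H 1 * H 3 := by
  obtain ⟨⟨hsub, hdown⟩, -, hexch⟩ := hM
  obtain ⟨hle3, B, hB, hB3⟩ := hrank
  have hg : R3.Good X C :=
    { sub := hsub
      down := hdown
      exch := hexch
      le3 := hle3
      basis := ⟨B, hB, hB3⟩
      loopless := fun x hx => by
        obtain ⟨F, hF, hxF⟩ := hloopless x hx
        exact hdown F hF _ (singleton_subset_iff.2 hxF)
      coloopless := fun x hx => by
        obtain ⟨F, ⟨hF, hmax⟩, hxF⟩ := hcoloopless x hx
        refine ⟨F, hF, ?_, hxF⟩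
        by_contra hne
        have := hle3 F hF
        obtain ⟨z, -, hzF, hzC⟩ := hexch F hF B hB (by omega)
        exact hzF (hmax _ hzC (subset_insert _ _) ▸ mem_insert_self _ _) }
  obtain ⟨i1, i2, i3⟩ := R3.inv hg
  -- Four values of `q` determine the four coefficients.
  have e0 := hH 0
  have e1 := hH 1
  have e2 := hH (-1)
  have e3 := hH 2
  rw [R3.hPoly_eq hg, hX] at e0 e1 e2 e3
  rw [hX] at i2 i3
  generalize (R3.fc C 2).card = f2 at *
  generalize (R3.fc C 3).card = f3 at *
  simp only [sum_range_succ, sum_range_zero] at e0 e1 e2 e3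
  norm_num at e0 e1 e2 e3
  have z0 : (1 : ℤ) = H 0 := by exact_mod_cast e0
  have z1 : (f3 : ℤ) = H 0 + H 1 + H 2 + H 3 := by exact_mod_cast e1
  have z2 : (2 : ℤ) ^ 3 + -((m : ℤ) * 2 ^ 2) + f2 * 2 + -(f3 : ℤ) = H 0 + -H 1 + H 2 + -H 3 := by
    have : ((2 : ℂ) ^ 3 + -((m : ℂ) * 2 ^ 2) + f2 * 2 + -(f3 : ℂ)) =
      H 0 + -H 1 + H 2 + -H 3 := by linear_combination e2
    exact_mod_cast this
  have z3 : (-1 : ℤ) + m * 2 + -(f2 * 4) + f3 * 8 = H 0 + H 1 * 2 + H 2 * 4 + H 3 * 8 := by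
    have : ((-1 : ℂ) + m * 2 + -(f2 * 4) + f3 * 8) = H 0 + H 1 * 2 + H 2 * 4 + H 3 * 8 := by
      linear_combination e3
    exact_mod_cast this
  have a1 : H 1 = m - 3 := by omega
  have a2 : H 2 = f2 - 2 * m + 3 := by omega
  have a3 : H 3 = f3 - f2 + m - 1 := by omega
  have b2 : H 1 ≤ H 2 := by omega
  have b3 : H 3 = H 1 - 2 ∨ H 3 = H 1 - 1 ∨ H 1 ≤ H 3 := by omega
  have b1 : 3 ≤ H 1 := by omega
  rcases b3 with b | b | b
  · have : 2 * H 1 - 3 ≤ H 2 := by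
      have := (i3 (by omega)).1
      omega
    rw [b]; nlinarith
  · rw [b]; nlinarith
  · nlinarith [mul_nonneg (by omega : 0 ≤ H 3) (sub_nonneg.2 b)]
end

section
/- Let M be a matroid of rank d on ground set X, let v ∈ X be neither a loop nor a coloop, and let k ≥ 1. Let Th(M,v,k) be the k-thickening of M at v: the complex on (X∖{v}) ∪ {v₁,…,v_k} whose faces are the faces σ of M with v ∉ σ, together with the sets (σ∖{v})∪{v_i} for each face σ of M with v ∈ σ and each 1 ≤ i ≤ k. Then the H-polynomials satisfy h_{Th(M,v,k)}(q) = h_{del_v M}(q) + k·q·h_{link_v M}(q). -/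
/-! The copies `w i` lie outside `X`, so the faces of the thickening are, without repetition, the
faces of the deletion and the sets `insert (w i) τ` for `τ` a face of the link and `i : Fin k`.
Such a set has one element more than `τ`, so in `h` it contributes
`q ^ (|τ| + 1) * (1 - q) ^ (d - (|τ| + 1))`, which is `q` times the contribution of `τ` to the
H-polynomial of the link in dimension `d - 1`. Summing over the `k` indices gives the factor
`k * q`. -/

open Finset

/-- The deletion of `v`: faces of `C` not containing `v`. -/
def delC {α : Type*} [DecidableEq α] (C : Finset (Finset α)) (v : α) : Finset (Finset α) :=
  C.filter fun σ => v ∉ σ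

/-- The link of `v`: the sets `σ \ {v}` for faces `σ` of `C` containing `v`. -/
def linkC {α : Type*} [DecidableEq α] (C : Finset (Finset α)) (v : α) : Finset (Finset α) :=
  (C.filter fun σ => v ∈ σ).image fun σ => σ.erase v

/-- The `k`-thickening of `C` at `v`, using `w 0, …, w (k-1)` as the `k` parallel copies of
`v`: faces not containing `v` stay, and each face `σ ∋ v` is replaced by the `k` faces
`(σ \ {v}) ∪ {w i}`. -/
def thickening {α : Type*} [DecidableEq α] (C : Finset (Finset α)) (v : α) (k : ℕ)
    (w : Fin k → α) : Finset (Finset α) :=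
  (C.filter fun σ => v ∉ σ) ∪
    (C.filter fun σ => v ∈ σ).biUnion fun σ =>
      (Finset.univ : Finset (Fin k)).image fun i => insert (w i) (σ.erase v)

/-- for a rank-`d` matroid `M` and `v` neither a loop nor a coloop, the
H-polynomials satisfy `h_{Th(M,v,k)}(q) = h_{del_v M}(q) + k·q·h_{link_v M}(q)`
(where `Th(M,v,k)` has dimension `d`, `del_v M` has dimension `d`, and `link_v M` has
dimension `d-1`). -/
theorem thickening_hPoly {α : Type*} [DecidableEq α]
    (X : Finset α) (C : Finset (Finset α)) (d k : ℕ) (hk : 1 ≤ k)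
    (hM : IsMatroidC X C)
    (hrank : (∀ F ∈ C, F.card ≤ d) ∧ ∃ F ∈ C, F.card = d)
    (v : α) (hv : v ∈ X)
    (hnotloop : ∃ F ∈ C, v ∈ F)
    (hnotcoloop : ∃ F, IsFacet C F ∧ v ∉ F)
    (w : Fin k → α) (hw : Function.Injective w) (hwX : ∀ i, w i ∉ X) :
    ∀ q : ℂ, hPoly (thickening C v k w) d q =
      hPoly (delC C v) d q + (k : ℂ) * q * hPoly (linkC C v) (d - 1) q := by
  have hsub : ∀ F ∈ C, F ⊆ X := hM.1.1
  have hwF : ∀ F ∈ C, ∀ i, w i ∉ F := fun F hF i hi => hwX i (hsub F hF hi)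
  have hwE : ∀ F ∈ C, ∀ i, w i ∉ F.erase v := fun F hF i hi =>
    hwF F hF i (Finset.mem_of_mem_erase hi)
  -- `w i` is the only element of `insert (w i) (σ \ {v})` outside `X`, so both `i` and `σ`
  -- can be recovered from this set.
  have hidx : ∀ F ∈ C, ∀ G ∈ C, ∀ i j,
      insert (w i) (F.erase v) = insert (w j) (G.erase v) → i = j := by
    intro F hF G hG i j h
    have hi : w i ∈ insert (w j) (G.erase v) := h ▸ Finset.mem_insert_self _ _
    rcases Finset.mem_insert.1 hi with h' | h'
    · exact hw h'
    · exact absurd h' (hwE G hG i)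
  have herase : ∀ F ∈ C, ∀ G ∈ C, v ∈ F → v ∈ G → F.erase v = G.erase v → F = G := by
    intro F _ G _ hvF hvG h
    rw [← Finset.insert_erase hvF, h, Finset.insert_erase hvG]
  have hinj : ∀ F ∈ C, ∀ G ∈ C, v ∈ F → v ∈ G → ∀ i j,
      insert (w i) (F.erase v) = insert (w j) (G.erase v) → F = G := by
    intro F hF G hG hvF hvG i j h
    obtain rfl := hidx F hF G hG i j h
    refine herase F hF G hG hvF hvG ?_
    rw [← Finset.erase_insert (hwE F hF i), h, Finset.erase_insert (hwE G hG i)]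
  intro q
  unfold hPoly thickening delC linkC
  rw [Finset.sum_union, Finset.sum_biUnion, Finset.sum_image]
  · congr 1
    rw [Finset.mul_sum]
    refine Finset.sum_congr rfl fun σ hσ => ?_
    obtain ⟨hσC, hvσ⟩ := Finset.mem_filter.1 hσ
    rw [Finset.sum_image fun i _ j _ h => hidx σ hσC σ hσC i j h]
    have hcard : ∀ i, (insert (w i) (σ.erase v)).card = (σ.erase v).card + 1 := fun i =>
      Finset.card_insert_of_notMem (hwE σ hσC i)
    have hexp : d - ((σ.erase v).card + 1) = d - 1 - (σ.erase v).card := by omega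
    simp only [hcard, hexp, Finset.sum_const, Finset.card_univ, Fintype.card_fin, nsmul_eq_mul]
    ring
  · intro F hF G hG h
    obtain ⟨hF, hvF⟩ := Finset.mem_filter.1 hF
    obtain ⟨hG, hvG⟩ := Finset.mem_filter.1 hG
    exact herase F hF G hG hvF hvG h
  · intro F hF G hG hne
    obtain ⟨hF, hvF⟩ := Finset.mem_filter.1 hF
    obtain ⟨hG, hvG⟩ := Finset.mem_filter.1 hG
    refine Finset.disjoint_left.2 fun S hS hS' => hne ?_
    obtain ⟨i, -, rfl⟩ := Finset.mem_image.1 hS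
    obtain ⟨j, -, h⟩ := Finset.mem_image.1 hS'
    exact hinj F hF G hG hvF hvG i j h.symm
  · refine Finset.disjoint_left.2 fun S hS hS' => ?_
    obtain ⟨σ, -, hσ⟩ := Finset.mem_biUnion.1 hS'
    obtain ⟨i, -, rfl⟩ := Finset.mem_image.1 hσ
    exact hwF _ (Finset.mem_filter.1 hS).1 i (Finset.mem_insert_self _ _)
end

section
/- Let M be a matroid on ground set X, let v ∈ X, and let k ≥ 1. Let Rep(M,v,k) be the k-replacement of M at v: the complex on (X∖{v}) ∪ {v₁,…,v_k} whose faces are the sets (σ∖{v})∪{v₁,…,v_k} for each face σ of M with v ∈ σ, together with the sets σ∪τ for each face σ of M with v ∉ σ and each proper subset τ ⊊ {v₁,…,v_k}. Then the F-polynomials satisfy f_{Rep(M,v,k)}(q) = q^k·f_{link_v M}(q) + ((1+q)^k − q^k)·f_{del_v M}(q). -/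
/-!
On two disjoint ground sets `X` and `W`, a set `σ ∪ τ` with `σ ⊆ X`, `τ ⊆ W` determines `σ` and `τ`
and has cardinality `|σ| + |τ|`, so the F-polynomial of a join `A * B` is the product of those of
`A` and `B` (`fPoly_join`). With `W = {w 0, …, w (k-1)}`, the replacement is the union of the join
of the link with the single set `W` and the join of the deletion with the proper subsets of `W`;
these are disjoint because the first consists of sets containing `W` and the second of sets
that do not. The proper subsets of `W` have F-polynomial `(1 + q)^k - q^k` by the binomial
theorem (`fPoly_properSubsets`).
-/

open Finset

/-- The F-polynomial of a complex: `f_C(q) = Σ_i F_i q^i = Σ_{F ∈ C} q^|F|`. -/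
noncomputable def fPoly {α : Type*} [DecidableEq α] (C : Finset (Finset α)) (q : ℂ) : ℂ :=
  ∑ F ∈ C, q ^ F.card

/-- The `k`-replacement of `C` at `v`, using `w 0, …, w (k-1)` as the `k` replacing elements:
each face `σ ∋ v` becomes `(σ \ {v}) ∪ {w 0, …, w (k-1)}`, and each face `σ ∌ v` yields the
faces `σ ∪ τ` for every proper subset `τ` of `{w 0, …, w (k-1)}`. -/
def replacement {α : Type*} [DecidableEq α] (C : Finset (Finset α)) (v : α) (k : ℕ)
    (w : Fin k → α) : Finset (Finset α) :=
  ((C.filter fun σ => v ∈ σ).image fun σ => σ.erase v ∪ Finset.image w Finset.univ) ∪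
    (C.filter fun σ => v ∉ σ).biUnion fun σ =>
      ((Finset.image w Finset.univ).powerset.erase (Finset.image w Finset.univ)).image
        fun τ => σ ∪ τ

/-- The F-polynomial is multiplicative on joins over disjoint ground sets. Neither family need be
closed under taking subsets. -/
lemma fPoly_join {α : Type*} [DecidableEq α] {X W : Finset α} (hXW : Disjoint X W)
    {A B : Finset (Finset α)} (hA : ∀ σ ∈ A, σ ⊆ X) (hB : ∀ τ ∈ B, τ ⊆ W) (q : ℂ) :
    fPoly (Finset.image₂ (· ∪ ·) A B) q = fPoly A q * fPoly B q := by
  have hinj : Set.InjOn (Function.uncurry fun σ τ : Finset α => σ ∪ τ) (A ×ˢ B : Finset _) := by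
    rintro ⟨σ, τ⟩ h ⟨σ', τ'⟩ h' heq
    simp only [coe_product, Set.mem_prod, mem_coe, Function.uncurry] at h h' heq
    have hX : ∀ x ∈ X, x ∉ W := fun x hx => Finset.disjoint_left.1 hXW hx
    have h1 := hA _ h.1
    have h2 := hB _ h.2
    have h3 := hA _ h'.1
    have h4 := hB _ h'.2
    have key : ∀ x, x ∈ σ ∪ τ ↔ x ∈ σ' ∪ τ' := fun x => by rw [heq]
    simp only [mem_union] at key
    refine Prod.ext ?_ ?_
    all_goals
      ext x
      have := key x
      have := hX x
      have := @h1 x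
      have := @h2 x
      have := @h3 x
      have := @h4 x
      tauto
  rw [← Finset.image_uncurry_product]
  unfold fPoly
  rw [Finset.sum_image hinj, Finset.sum_mul_sum, Finset.sum_product]
  refine Finset.sum_congr rfl fun σ hσ => Finset.sum_congr rfl fun τ hτ => ?_
  have hd : Disjoint σ τ := hXW.mono (hA σ hσ) (hB τ hτ)
  simp only [Function.uncurry]
  rw [Finset.card_union_of_disjoint hd, pow_add]

lemma fPoly_properSubsets {α : Type*} [DecidableEq α] (W : Finset α) (q : ℂ) :
    fPoly (W.powerset.erase W) q = (1 + q) ^ W.card - q ^ W.card := by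
  have h := Finset.sum_pow_mul_eq_add_pow q 1 W
  simp only [one_pow, mul_one] at h
  have h' := Finset.sum_erase_add W.powerset (fun t => q ^ t.card) (Finset.mem_powerset_self W)
  unfold fPoly
  rw [add_comm 1 q, ← h, ← h']
  ring

/-- The replacement as a union of two joins. -/
lemma replacement_eq_join {α : Type*} [DecidableEq α] (C : Finset (Finset α)) (v : α) (k : ℕ)
    (w : Fin k → α) :
    replacement C v k w =
      Finset.image₂ (· ∪ ·) (linkC C v) {Finset.image w Finset.univ} ∪
      Finset.image₂ (· ∪ ·) (delC C v)
        ((Finset.image w Finset.univ).powerset.erase (Finset.image w Finset.univ)) := by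
  unfold replacement linkC delC
  rw [Finset.image₂_singleton_right, Finset.image_image]
  congr 1
  ext F
  simp only [mem_biUnion, mem_image, mem_image₂]

/-- the F-polynomials satisfy
`f_{Rep(M,v,k)}(q) = q^k f_{link_v M}(q) + ((1+q)^k - q^k) f_{del_v M}(q)`. -/
theorem replacement_fPoly {α : Type*} [DecidableEq α]
    (X : Finset α) (C : Finset (Finset α)) (k : ℕ) (hk : 1 ≤ k)
    (hM : IsMatroidC X C) (v : α) (hv : v ∈ X)
    (w : Fin k → α) (hw : Function.Injective w) (hwX : ∀ i, w i ∉ X) :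
    ∀ q : ℂ, fPoly (replacement C v k w) q =
      q ^ k * fPoly (linkC C v) q + ((1 + q) ^ k - q ^ k) * fPoly (delC C v) q := by
  intro q
  have hW : (Finset.image w Finset.univ).card = k := by
    rw [Finset.card_image_of_injective _ hw, Finset.card_univ, Fintype.card_fin]
  have hXW : Disjoint X (Finset.image w Finset.univ) := by
    rw [Finset.disjoint_right]
    intro x hx
    obtain ⟨i, -, rfl⟩ := Finset.mem_image.1 hx
    exact hwX i
  have hpow := fPoly_properSubsets (Finset.image w Finset.univ) q
  rw [replacement_eq_join]
  generalize Finset.image w Finset.univ = W at *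
  have hdel : ∀ σ ∈ delC C v, σ ⊆ X := fun σ hσ => hM.1.1 σ (Finset.mem_filter.1 hσ).1
  have hlink : ∀ σ ∈ linkC C v, σ ⊆ X := by
    intro σ hσ
    obtain ⟨ρ, hρ, rfl⟩ := Finset.mem_image.1 hσ
    exact (Finset.erase_subset _ _).trans (hM.1.1 ρ (Finset.mem_filter.1 hρ).1)
  have hdisj : Disjoint (Finset.image₂ (· ∪ ·) (linkC C v) {W})
      (Finset.image₂ (· ∪ ·) (delC C v) (W.powerset.erase W)) := by
    rw [Finset.disjoint_left]
    intro F hF hF'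
    obtain ⟨σ, -, τ, hτ, rfl⟩ := Finset.mem_image₂.1 hF
    obtain ⟨σ', hσ', τ', hτ', heq⟩ := Finset.mem_image₂.1 hF'
    rw [Finset.mem_singleton] at hτ
    subst hτ
    rw [Finset.mem_erase, Finset.mem_powerset] at hτ'
    refine hτ'.1 (hτ'.2.antisymm fun x hx => ?_)
    have hx' : x ∈ σ' ∪ τ' := heq ▸ Finset.mem_union_right σ hx
    exact (Finset.mem_union.1 hx').resolve_left
      fun h => Finset.disjoint_left.1 hXW (hdel σ' hσ' h) hx
  have hsplit : ∀ A B : Finset (Finset α), Disjoint A B →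
      fPoly (A ∪ B) q = fPoly A q + fPoly B q := fun A B h => Finset.sum_union h
  have hsingle : fPoly {W} q = q ^ k := by simp [fPoly, hW]
  rw [hsplit _ _ hdisj, fPoly_join hXW hlink (by simp), hsingle,
    fPoly_join hXW hdel (fun τ hτ => Finset.mem_powerset.1 (Finset.mem_of_mem_erase hτ)),
    hpow, hW]
  ring
end
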